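/- Let h(x,y) = x³ + y³ − x²y² + 9xy − 54. Then for every τ in the complex upper half-plane, h(β(τ), β(2τ)) = 0 and h(α(τ), α(2τ)) = 0. -/

import Mathlib

open Complex

/-- The Dedekind eta function `η(τ) = e^{πiτ/12} ∏_{n≥1} (1 - e^{2πinτ})`. -/
noncomputable def dedekindEta (τ : ℂ) : ℂ :=
  Complex.exp (Real.pi * I * τ / 12) *
    ∏' n : ℕ, (1 - Complex.exp (2 * Real.pi * I * (n + 1) * τ))

/-- `α(τ) = 3 + 27 η(9τ)³/η(τ)³`. -/
noncomputable def alpha (τ : ℂ) : ℂ :=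
  3 + 27 * dedekindEta (9 * τ) ^ 3 / dedekindEta τ ^ 3

/-- `β(τ) = 3 + η(τ/3)³/η(3τ)³`. -/
noncomputable def beta (τ : ℂ) : ℂ :=
  3 + dedekindEta (τ / 3) ^ 3 / dedekindEta (3 * τ) ^ 3

/-!
Write `q = exp (2πiτ)` and `x(τ) = η(τ)³ / η(9τ)³`. In terms of Ramanujan's theta functions
`φ(-q)` and `ψ(q)`, Jacobi's triple product gives `η(τ)³ = q^(1/8) φ(-q)² ψ(q)` and
`η(2τ)³ = q^(1/4) φ(-q) ψ(q)²`, so that `x(τ) = u² v` and `x(2τ) = u v²` for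
`u = φ(-q) / φ(-q⁹)` and `v = ψ(q) / (q ψ(q⁹))`. Splitting the theta series of `φ(-q)` and `ψ(q)`
modulo `3` isolates `φ(-q⁹)` and `q ψ(q⁹)`; by the triple product again, the remaining parts
multiply to `-2q φ(-q⁹) ψ(q⁹)`, that is `(u - 1) (v - 1) = -2`, and this forces
`h(3 + x(τ), 3 + x(2τ)) = 0`. Finally `β(τ) = 3 + x(τ/3)`, while `α(τ) = 3 + 27 / x(τ)` and the
involution `x ↦ 27 / x` preserves the curve.
-/

open Filter Finset Topology

section GaussianBinomial

variable {𝕜 : Type*} [Field 𝕜] {q : 𝕜}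

/-- The reciprocal `1 / ((1 - q) ⋯ (1 - q ^ n))` of the finite `q`-factorial, set to be zero for
negative `n` as dictated by the recurrence `invQFactorial_sub_one`. -/
def invQFactorial (q : 𝕜) (n : ℤ) : 𝕜 :=
  if n < 0 then 0 else (∏ i ∈ range n.toNat, (1 - q ^ (i + 1)))⁻¹

lemma invQFactorial_natCast (q : 𝕜) (n : ℕ) :
    invQFactorial q n = (∏ i ∈ range n, (1 - q ^ (i + 1)))⁻¹ := by
  simp [invQFactorial]

lemma invQFactorial_of_neg (q : 𝕜) {n : ℤ} (hn : n < 0) : invQFactorial q n = 0 :=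
  if_pos hn

lemma invQFactorial_sub_one (hq : ∀ n : ℕ, q ^ (n + 1) ≠ 1) (n : ℤ) :
    invQFactorial q (n - 1) = (1 - q ^ n) * invQFactorial q n := by
  rcases lt_trichotomy n 0 with hn | rfl | hn
  · simp [invQFactorial_of_neg, hn, show n - 1 < 0 by omega]
  · simp [invQFactorial_of_neg]
  · obtain ⟨k, rfl⟩ : ∃ k : ℕ, n = (k + 1 : ℕ) := ⟨(n - 1).toNat, by omega⟩
    rw [Nat.cast_succ, add_sub_cancel_right, ← Nat.cast_succ, invQFactorial_natCast,
      invQFactorial_natCast, zpow_natCast, prod_range_succ, mul_inv_rev,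
      mul_inv_cancel_left₀ (sub_ne_zero.mpr (hq k).symm)]

/-- The Gaussian binomial coefficient with upper index `m` and lower index `k`, which vanishes
unless `0 ≤ k ≤ m`. The closed form is used, so `q` should not be a root of unity. -/
def gaussBinom (q : 𝕜) (m : ℕ) (k : ℤ) : 𝕜 :=
  (∏ i ∈ range m, (1 - q ^ (i + 1))) * invQFactorial q k * invQFactorial q (m - k)

lemma gaussBinom_zero_left (q : 𝕜) (k : ℤ) : gaussBinom q 0 k = if k = 0 then 1 else 0 := by
  rcases lt_trichotomy k 0 with hk | rfl | hk
  · simp [gaussBinom, invQFactorial_of_neg, hk, hk.ne]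
  · simp [gaussBinom, invQFactorial]
  · simp [gaussBinom, invQFactorial_of_neg, hk, hk.ne']

lemma gaussBinom_symm (q : 𝕜) (m : ℕ) (k : ℤ) : gaussBinom q m (m - k) = gaussBinom q m k := by
  rw [gaussBinom, gaussBinom, sub_sub_cancel, mul_right_comm]

lemma gaussBinom_succ_succ (hq0 : q ≠ 0) (hq : ∀ n : ℕ, q ^ (n + 1) ≠ 1) (m : ℕ) (k : ℤ) :
    gaussBinom q (m + 1) (k + 1) =
      gaussBinom q m k + q ^ (k + 1) * gaussBinom q m (k + 1) := by
  have hk : invQFactorial q k = (1 - q ^ (k + 1)) * invQFactorial q (k + 1) := by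
    rw [← invQFactorial_sub_one hq, add_sub_cancel_right]
  have hmk := invQFactorial_sub_one hq (m - k)
  have hpow : q ^ (k + 1) * q ^ (m - k : ℤ) = q ^ (m + 1) := by
    rw [← zpow_add₀ hq0, ← zpow_natCast]
    congr 1
    push_cast
    ring
  rw [gaussBinom, gaussBinom, gaussBinom, prod_range_succ, hk, Nat.cast_succ,
    add_sub_add_right_eq_sub, ← sub_sub, hmk, ← hpow]
  ring

lemma gaussBinom_succ_succ' (hq0 : q ≠ 0) (hq : ∀ n : ℕ, q ^ (n + 1) ≠ 1) (m : ℕ) (k : ℤ) :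
    gaussBinom q (m + 1) (k + 1) =
      q ^ (m - k : ℤ) * gaussBinom q m k + gaussBinom q m (k + 1) := by
  rw [← gaussBinom_symm, Nat.cast_succ, add_sub_add_right_eq_sub, ← sub_add_cancel (m - k : ℤ) 1,
    gaussBinom_succ_succ hq0 hq, sub_add_cancel, gaussBinom_symm, sub_sub, gaussBinom_symm,
    add_comm]

end GaussianBinomial

section ThetaTerm

lemma two_mul_choose_two (n : ℤ) : 2 * Ring.choose n 2 = n * (n - 1) := by
  have h := Ring.descPochhammer_eq_factorial_smul_choose n 2
  rw [← Polynomial.eval_eq_smeval, descPochhammer_eval_eq_prod_range] at h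
  simpa [prod_range_succ] using h.symm

lemma choose_two_add_one (n : ℤ) : Ring.choose (n + 1) 2 = Ring.choose n 2 + n := by
  rw [Ring.choose_succ_succ, Ring.choose_one_right, add_comm]

lemma choose_two_neg (n : ℤ) : Ring.choose (-n) 2 = Ring.choose n 2 + n := by
  linarith [two_mul_choose_two n, two_mul_choose_two (-n)]

variable {𝕜 : Type*} [Field 𝕜] {q z : 𝕜}

/-- The `n`-th term `(-1) ^ n q ^ (n (n - 1) / 2) z ^ n` of the theta series. -/
def thetaTerm (z q : 𝕜) (n : ℤ) : 𝕜 :=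
  q ^ Ring.choose n 2 * (-z) ^ n

lemma thetaTerm_natCast (z q : 𝕜) (n : ℕ) : thetaTerm z q n = q ^ n.choose 2 * (-z) ^ n := by
  rw [thetaTerm, Ring.choose_natCast, zpow_natCast, zpow_natCast]

lemma thetaTerm_add_one (hq : q ≠ 0) (hz : z ≠ 0) (n : ℤ) :
    thetaTerm z q (n + 1) = -z * q ^ n * thetaTerm z q n := by
  rw [thetaTerm, thetaTerm, choose_two_add_one, zpow_add₀ hq, zpow_add_one₀ (neg_ne_zero.mpr hz)]
  ring

lemma thetaTerm_neg (hq : q ≠ 0) (n : ℤ) : thetaTerm z q (-n) = thetaTerm (q / z) q n := by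
  rw [thetaTerm, thetaTerm, choose_two_neg, zpow_add₀ hq, zpow_neg, ← inv_zpow, mul_assoc,
    ← mul_zpow, inv_neg, mul_neg, div_eq_mul_inv]

lemma gaussBinom_mul_thetaTerm_succ_left (hq0 : q ≠ 0) (hq : ∀ n : ℕ, q ^ (n + 1) ≠ 1)
    (hz : z ≠ 0) (M N : ℕ) (n : ℤ) :
    gaussBinom q (M + 1 + N) (N + n) * thetaTerm z q n =
      gaussBinom q (M + N) (N + n) * thetaTerm z q n -
        z * q ^ M * (gaussBinom q (M + N) (N + (n - 1)) * thetaTerm z q (n - 1)) := by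
  obtain ⟨n, rfl⟩ : ∃ k, n = k + 1 := ⟨n - 1, by ring⟩
  have hpow : q ^ ((M + N : ℕ) - (N + n) : ℤ) * q ^ n = q ^ M := by
    rw [← zpow_add₀ hq0, ← zpow_natCast]
    congr 1
    push_cast
    ring
  rw [add_right_comm M 1 N, ← add_assoc, gaussBinom_succ_succ' hq0 hq, thetaTerm_add_one hq0 hz,
    add_sub_cancel_right, ← hpow]
  ring

lemma gaussBinom_mul_thetaTerm_succ_right (hq0 : q ≠ 0) (hq : ∀ n : ℕ, q ^ (n + 1) ≠ 1)
    (hz : z ≠ 0) (M N : ℕ) (n : ℤ) :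
    gaussBinom q (M + (N + 1)) ((N + 1 : ℕ) + n) * thetaTerm z q n =
      gaussBinom q (M + N) (N + n) * thetaTerm z q n -
        q / z * q ^ N * (gaussBinom q (M + N) (N + (n + 1)) * thetaTerm z q (n + 1)) := by
  have hpow : q ^ (N + n + 1 : ℤ) = q * q ^ N * q ^ n := by
    rw [zpow_add_one₀ hq0, zpow_add₀ hq0, zpow_natCast]
    ring
  rw [← add_assoc, Nat.cast_succ, add_right_comm (N : ℤ), gaussBinom_succ_succ hq0 hq, hpow,
    thetaTerm_add_one hq0 hz, ← add_assoc (N : ℤ)]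
  field_simp
  ring

/-- **Finite Jacobi triple product** (MacMahon). -/
theorem hasSum_gaussBinom_mul_thetaTerm [TopologicalSpace 𝕜] [IsTopologicalRing 𝕜]
    (hq0 : q ≠ 0) (hq : ∀ n : ℕ, q ^ (n + 1) ≠ 1) (hz : z ≠ 0) (M N : ℕ) :
    HasSum (fun n : ℤ ↦ gaussBinom q (M + N) (N + n) * thetaTerm z q n)
      ((∏ i ∈ range M, (1 - z * q ^ i)) * ∏ i ∈ range N, (1 - q / z * q ^ i)) := by
  induction M with
  | zero =>
    induction N with
    | zero =>
      convert hasSum_ite_eq (0 : ℤ) (1 : 𝕜) using 2 with n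
      · by_cases hn : n = 0 <;> simp [gaussBinom_zero_left, thetaTerm, hn]
      · simp
    | succ N ih =>
      have hshift := ((Equiv.addRight (1 : ℤ)).hasSum_iff.mpr ih).mul_left (q / z * q ^ N)
      rw [prod_range_succ, ← mul_assoc, mul_one_sub, mul_comm _ (q / z * q ^ N)]
      simp_rw [gaussBinom_mul_thetaTerm_succ_right hq0 hq hz]
      exact ih.sub hshift
  | succ M ih =>
    have hshift := ((Equiv.subRight (1 : ℤ)).hasSum_iff.mpr ih).mul_left (z * q ^ M)
    rw [prod_range_succ, mul_right_comm, mul_one_sub, mul_comm _ (z * q ^ M)]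
    simp_rw [gaussBinom_mul_thetaTerm_succ_left hq0 hq hz]
    exact ih.sub hshift

end ThetaTerm

section QPochhammer

variable {𝕜 : Type*} [NormedField 𝕜] {q : 𝕜}

/-- The infinite `q`-Pochhammer symbol `(a; q)_∞`, meaningful for `‖q‖ < 1`. -/
noncomputable def qPochhammer (a q : 𝕜) : 𝕜 :=
  ∏' k : ℕ, (1 - a * q ^ k)

lemma norm_pow_lt_one (hq : ‖q‖ < 1) {n : ℕ} (hn : n ≠ 0) : ‖q ^ n‖ < 1 := by
  rw [norm_pow]
  exact pow_lt_one₀ (norm_nonneg q) hq hn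

lemma pow_succ_ne_one_of_norm_lt_one (hq : ‖q‖ < 1) (n : ℕ) : q ^ (n + 1) ≠ 1 := fun h ↦
  (norm_pow_lt_one hq n.succ_ne_zero).ne (by rw [h, norm_one])

lemma summable_norm_neg_mul_pow (hq : ‖q‖ < 1) (a : 𝕜) :
    Summable fun k : ℕ ↦ ‖-(a * q ^ k)‖ := by
  simpa only [norm_neg, norm_mul, norm_pow] using
    (summable_geometric_of_lt_one (norm_nonneg q) hq).mul_left ‖a‖

variable [CompleteSpace 𝕜]

lemma multipliable_one_sub_mul_pow (hq : ‖q‖ < 1) (a : 𝕜) :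
    Multipliable fun k : ℕ ↦ 1 - a * q ^ k := by
  simpa only [sub_eq_add_neg] using
    multipliable_one_add_of_summable (summable_norm_neg_mul_pow hq a)

lemma tendsto_prod_range_qPochhammer (hq : ‖q‖ < 1) (a : 𝕜) :
    Tendsto (fun n : ℕ ↦ ∏ k ∈ range n, (1 - a * q ^ k)) atTop (𝓝 (qPochhammer a q)) :=
  (multipliable_one_sub_mul_pow hq a).tendsto_prod_tprod_nat

lemma qPochhammer_self_ne_zero (hq : ‖q‖ < 1) : qPochhammer q q ≠ 0 := by
  simp only [qPochhammer, sub_eq_add_neg]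
  refine tprod_one_add_ne_zero_of_summable (fun k ↦ ?_) (summable_norm_neg_mul_pow hq q)
  rw [← sub_eq_add_neg, ← pow_succ', sub_ne_zero]
  exact (pow_succ_ne_one_of_norm_lt_one hq k).symm

lemma qPochhammer_eq_one_sub_mul (hq : ‖q‖ < 1) (a : 𝕜) :
    qPochhammer a q = (1 - a) * qPochhammer (a * q) q := by
  have hshift (k : ℕ) : a * q ^ (k + 1) = a * q * q ^ k := by ring
  rw [qPochhammer, tprod_eq_zero_mul', pow_zero, mul_one]
  · simp_rw [hshift, qPochhammer]
  · simpa only [hshift] using multipliable_one_sub_mul_pow hq (a * q)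

lemma qPochhammer_mul_qPochhammer_neg (hq : ‖q‖ < 1) (a : 𝕜) :
    qPochhammer a q * qPochhammer (-a) q = qPochhammer (a ^ 2) (q ^ 2) := by
  rw [qPochhammer, qPochhammer, qPochhammer, ← (multipliable_one_sub_mul_pow hq a).tprod_mul
    (multipliable_one_sub_mul_pow hq (-a))]
  exact tprod_congr fun k ↦ by ring

lemma qPochhammer_eq_prod_residues (hq : ‖q‖ < 1) (a : 𝕜) (m : ℕ) [NeZero m] :
    qPochhammer a q = ∏ i ∈ range m, qPochhammer (a * q ^ i) (q ^ m) := by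
  have hsplit (k : ℕ) (i : Fin m) : a * q ^ (k * m + i) = a * q ^ (i : ℕ) * (q ^ m) ^ k := by
    ring
  obtain ⟨e, he⟩ : ∃ e : ℕ × Fin m ≃ ℕ, ∀ p, e p = p.1 * m + p.2 :=
    ⟨(Nat.divModEquiv m).symm, fun _ ↦ rfl⟩
  have hmul : Multipliable fun p ↦ 1 - a * q ^ e p :=
    (e.multipliable_iff (f := fun k ↦ 1 - a * q ^ k)).mpr (multipliable_one_sub_mul_pow hq a)
  rw [prod_range, qPochhammer, ← e.tprod_eq, hmul.tprod_prod' fun _ ↦ .of_finite]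
  simp only [he, tprod_fintype, hsplit, qPochhammer]
  exact Multipliable.tprod_finsetProd fun i _ ↦
    multipliable_one_sub_mul_pow (norm_pow_lt_one hq (NeZero.ne m)) _

lemma qPochhammer_self_eq_odd_mul_even (hq : ‖q‖ < 1) :
    qPochhammer q q = qPochhammer q (q ^ 2) * qPochhammer (q ^ 2) (q ^ 2) := by
  simp [qPochhammer_eq_prod_residues hq q 2, prod_range_succ, sq]

/-- **Euler's identity** between partitions into odd parts and into distinct parts. -/
lemma qPochhammer_odd_mul_qPochhammer_neg (hq : ‖q‖ < 1) :
    qPochhammer q (q ^ 2) * qPochhammer (-q) q = 1 := by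
  refine mul_left_cancel₀ (qPochhammer_self_ne_zero hq) ?_
  linear_combination qPochhammer q (q ^ 2) * qPochhammer_mul_qPochhammer_neg hq q -
    qPochhammer_self_eq_odd_mul_even hq

end QPochhammer

section GaussianBinomialLimit

variable {𝕜 : Type*} [NormedField 𝕜] [CompleteSpace 𝕜] {q : 𝕜}

lemma tendsto_prod_one_sub_pow_succ (hq : ‖q‖ < 1) :
    Tendsto (fun n : ℕ ↦ ∏ i ∈ range n, (1 - q ^ (i + 1))) atTop (𝓝 (qPochhammer q q)) := by
  simpa only [pow_succ'] using tendsto_prod_range_qPochhammer hq q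

lemma tendsto_invQFactorial_natCast (hq : ‖q‖ < 1) :
    Tendsto (fun n : ℕ ↦ invQFactorial q n) atTop (𝓝 (qPochhammer q q)⁻¹) := by
  simpa only [invQFactorial_natCast] using
    (tendsto_prod_one_sub_pow_succ hq).inv₀ (qPochhammer_self_ne_zero hq)

lemma tendsto_invQFactorial (hq : ‖q‖ < 1) :
    Tendsto (invQFactorial q) atTop (𝓝 (qPochhammer q q)⁻¹) := by
  have htoNat : Tendsto Int.toNat atTop atTop :=
    tendsto_atTop.mpr fun b ↦ (eventually_ge_atTop (b : ℤ)).mono fun n hn ↦ by omega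
  refine ((tendsto_invQFactorial_natCast hq).comp htoNat).congr' ?_
  filter_upwards [eventually_ge_atTop 0] with n hn
  rw [Function.comp_apply, Int.toNat_of_nonneg hn]

lemma exists_norm_invQFactorial_le (hq : ‖q‖ < 1) : ∃ C, ∀ n, ‖invQFactorial q n‖ ≤ C := by
  obtain ⟨C, hC⟩ := (Metric.isBounded_range_of_tendsto _
    (tendsto_invQFactorial_natCast hq)).exists_norm_le
  have hnat (n : ℕ) : ‖invQFactorial q n‖ ≤ C := hC _ ⟨n, rfl⟩
  refine ⟨C, fun n ↦ ?_⟩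
  rcases lt_or_ge n 0 with hn | hn
  · rw [invQFactorial_of_neg q hn, norm_zero]
    exact (norm_nonneg _).trans (hnat 0)
  · lift n to ℕ using hn
    exact hnat n

lemma tendsto_gaussBinom_central (hq : ‖q‖ < 1) (n : ℤ) :
    Tendsto (fun N : ℕ ↦ gaussBinom q (N + N) (N + n)) atTop (𝓝 (qPochhammer q q)⁻¹) := by
  have hnum := (tendsto_prod_one_sub_pow_succ hq).comp (tendsto_id.atTop_add_atTop tendsto_id)
  have hadd : Tendsto (fun N : ℕ ↦ (N : ℤ) + n) atTop atTop :=
    tendsto_atTop_add_const_right _ _ tendsto_natCast_atTop_atTop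
  have hsub : Tendsto (fun N : ℕ ↦ ((N + N : ℕ) : ℤ) - (N + n)) atTop atTop := by
    simp only [Nat.cast_add, add_sub_add_left_eq_sub]
    exact tendsto_atTop_add_const_right _ _ tendsto_natCast_atTop_atTop
  have hlim := (hnum.mul ((tendsto_invQFactorial hq).comp hadd)).mul
    ((tendsto_invQFactorial hq).comp hsub)
  rwa [mul_inv_cancel₀ (qPochhammer_self_ne_zero hq), one_mul] at hlim

lemma exists_norm_gaussBinom_le (hq : ‖q‖ < 1) : ∃ C, ∀ m k, ‖gaussBinom q m k‖ ≤ C := by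
  obtain ⟨B, hB⟩ := (Metric.isBounded_range_of_tendsto _
    (tendsto_prod_one_sub_pow_succ hq)).exists_norm_le
  obtain ⟨C, hC⟩ := exists_norm_invQFactorial_le hq
  have hB0 : 0 ≤ B := (norm_nonneg _).trans (hB _ ⟨0, rfl⟩)
  have hC0 : 0 ≤ C := (norm_nonneg _).trans (hC 0)
  refine ⟨B * C * C, fun m k ↦ ?_⟩
  rw [gaussBinom, norm_mul, norm_mul]
  gcongr
  · exact hB _ ⟨m, rfl⟩
  · exact hC _
  · exact hC _

end GaussianBinomialLimit

section Theta

variable {𝕜 : Type*} [NormedField 𝕜] {q z : 𝕜}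

/-- The theta series `θ(z; q) = ∑ (-1) ^ n q ^ (n (n - 1) / 2) z ^ n` over the integers. -/
noncomputable def qTheta (z q : 𝕜) : 𝕜 :=
  ∑' n : ℤ, thetaTerm z q n

lemma qTheta_div (hq0 : q ≠ 0) : qTheta (q / z) q = qTheta z q := by
  rw [qTheta, qTheta, ← (Equiv.neg ℤ).tsum_eq (thetaTerm z q)]
  exact tsum_congr fun n ↦ (thetaTerm_neg hq0 n).symm

lemma qTheta_mul_left (hq0 : q ≠ 0) (hz : z ≠ 0) : qTheta (z * q) q = -z⁻¹ * qTheta z q := by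
  rw [qTheta, qTheta, ← (Equiv.addRight (1 : ℤ)).tsum_eq (thetaTerm z q), ← tsum_mul_left]
  refine tsum_congr fun n ↦ ?_
  rw [Equiv.coe_addRight, thetaTerm_add_one hq0 hz, thetaTerm, thetaTerm, ← neg_mul, mul_zpow]
  field_simp

lemma choose_two_mul_add (m k i : ℤ) :
    Ring.choose (k * m + i) 2 =
      Ring.choose i 2 + (m ^ 2 * Ring.choose k 2 + (Ring.choose m 2 + m * i) * k) := by
  refine mul_left_cancel₀ two_ne_zero ?_
  linear_combination two_mul_choose_two (k * m + i) - two_mul_choose_two i -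
    m ^ 2 * two_mul_choose_two k - k * two_mul_choose_two m

lemma thetaTerm_mul_add (hq0 : q ≠ 0) (hz : z ≠ 0) (m : ℕ) (k : ℤ) (i : ℕ) :
    thetaTerm z q (k * m + i) =
      thetaTerm z q i * thetaTerm (-((-z) ^ m * q ^ (m.choose 2 + m * i))) (q ^ m ^ 2) k := by
  have hpow : q ^ Ring.choose (k * m + i : ℤ) 2 =
      q ^ Ring.choose (i : ℤ) 2 * ((q ^ m ^ 2) ^ Ring.choose k 2 *
        (q ^ (m.choose 2 + m * i)) ^ k) := by
    rw [choose_two_mul_add, Ring.choose_natCast m, zpow_add₀ hq0, zpow_add₀ hq0, zpow_mul, zpow_mul]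
    norm_cast
  have hzpow : (-z) ^ (k * m + i : ℤ) = (-z) ^ (i : ℤ) * ((-z) ^ m) ^ k := by
    rw [add_comm, zpow_add₀ (neg_ne_zero.mpr hz), mul_comm k, zpow_mul, zpow_natCast (-z) m]
  rw [thetaTerm, thetaTerm, thetaTerm, hpow, hzpow, neg_neg, mul_zpow]
  ring

lemma summable_norm_thetaTerm_natCast (hq : ‖q‖ < 1) (hq0 : q ≠ 0) (hz : z ≠ 0) :
    Summable fun n : ℕ ↦ ‖thetaTerm z q n‖ := by
  have hne (n : ℕ) : ‖thetaTerm z q n‖ ≠ 0 := norm_ne_zero_iff.mpr <|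
    mul_ne_zero (zpow_ne_zero _ hq0) (zpow_ne_zero _ (neg_ne_zero.mpr hz))
  refine summable_of_ratio_test_tendsto_lt_one zero_lt_one (.of_forall hne) ?_
  have hratio (n : ℕ) : ‖thetaTerm z q (n + 1 : ℕ)‖ / ‖thetaTerm z q n‖ = ‖z‖ * ‖q‖ ^ n := by
    rw [Nat.cast_succ, thetaTerm_add_one hq0 hz, zpow_natCast, norm_mul,
      mul_div_cancel_right₀ _ (hne n), norm_mul, norm_neg, norm_pow]
  simpa only [norm_norm, hratio, mul_zero] using
    (tendsto_pow_atTop_nhds_zero_of_lt_one (norm_nonneg q) hq).const_mul ‖z‖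

lemma summable_norm_thetaTerm (hq : ‖q‖ < 1) (hq0 : q ≠ 0) (hz : z ≠ 0) :
    Summable fun n ↦ ‖thetaTerm z q n‖ := by
  refine .of_nat_of_neg (summable_norm_thetaTerm_natCast hq hq0 hz) ?_
  simpa only [thetaTerm_neg hq0] using
    summable_norm_thetaTerm_natCast hq hq0 (div_ne_zero hq0 hz)

variable [CompleteSpace 𝕜]

lemma summable_thetaTerm (hq : ‖q‖ < 1) (hq0 : q ≠ 0) (hz : z ≠ 0) :
    Summable (thetaTerm z q) :=
  .of_norm (summable_norm_thetaTerm hq hq0 hz)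

/-- **Jacobi triple product**. -/
theorem qTheta_eq_qPochhammer (hq : ‖q‖ < 1) (hq0 : q ≠ 0) (hz : z ≠ 0) :
    qTheta z q = qPochhammer q q * qPochhammer z q * qPochhammer (q / z) q := by
  obtain ⟨C, hC⟩ := exists_norm_gaussBinom_le hq
  have hsum : Tendsto (fun N : ℕ ↦ ∑' n : ℤ, gaussBinom q (N + N) (N + n) * thetaTerm z q n)
      atTop (𝓝 (∑' n : ℤ, (qPochhammer q q)⁻¹ * thetaTerm z q n)) := by
    refine tendsto_tsum_of_dominated_convergence
      ((summable_norm_thetaTerm hq hq0 hz).mul_left C)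
      (fun n ↦ (tendsto_gaussBinom_central hq n).mul_const _) (.of_forall fun N n ↦ ?_)
    rw [norm_mul]
    gcongr
    exact hC _ _
  have hprod := (tendsto_prod_range_qPochhammer hq z).mul
    (tendsto_prod_range_qPochhammer hq (q / z))
  simp_rw [(hasSum_gaussBinom_mul_thetaTerm hq0 (pow_succ_ne_one_of_norm_lt_one hq) hz _ _).tsum_eq,
    tsum_mul_left] at hsum
  rw [mul_assoc, ← tendsto_nhds_unique hsum hprod,
    mul_inv_cancel_left₀ (qPochhammer_self_ne_zero hq), qTheta]

lemma qTheta_eq_sum_residues (hq : ‖q‖ < 1) (hq0 : q ≠ 0) (hz : z ≠ 0) (m : ℕ) [NeZero m] :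
    qTheta z q = ∑ i ∈ range m,
      thetaTerm z q i * qTheta (-((-z) ^ m * q ^ (m.choose 2 + m * i))) (q ^ m ^ 2) := by
  obtain ⟨e, he⟩ : ∃ e : ℤ × Fin m ≃ ℤ, ∀ p, e p = p.1 * m + (p.2 : ℕ) :=
    ⟨(Int.divModEquiv m).symm, fun _ ↦ rfl⟩
  have hsum : Summable fun p ↦ thetaTerm z q (e p) :=
    e.summable_iff.mpr (summable_thetaTerm hq hq0 hz)
  rw [sum_range, qTheta, ← e.tsum_eq, hsum.tsum_prod' fun _ ↦ .of_finite]
  simp only [he, tsum_fintype, thetaTerm_mul_add hq0 hz, qTheta,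
    ← tsum_mul_left]
  have hm : m ^ 2 ≠ 0 := pow_ne_zero 2 (NeZero.ne m)
  refine Summable.tsum_finsetSum fun i _ ↦
    (summable_thetaTerm (norm_pow_lt_one hq hm) (pow_ne_zero _ hq0) ?_).mul_left _
  exact neg_ne_zero.mpr (mul_ne_zero (pow_ne_zero _ (neg_ne_zero.mpr hz)) (pow_ne_zero _ hq0))

lemma qTheta_trisection (hq : ‖q‖ < 1) (hq0 : q ≠ 0) (hz : z ≠ 0) :
    qTheta z q = qTheta (z ^ 3 * q ^ 3) (q ^ 9) - z * qTheta (z ^ 3 * q ^ 6) (q ^ 9) +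
      q * z ^ 2 * qTheta (z ^ 3 * q ^ 9) (q ^ 9) := by
  have hneg : (-z) ^ 3 = -z ^ 3 := by ring
  rw [qTheta_eq_sum_residues hq hq0 hz 3]
  simp [sum_range_succ, thetaTerm_natCast, hneg, sub_eq_add_neg]

end Theta

section ThetaPhiPsi

variable {𝕜 : Type*} [NormedField 𝕜] {q : 𝕜}

/-- Ramanujan's theta function `φ(-q) = ∑ (-1) ^ n q ^ n ^ 2`. -/
noncomputable def thetaPhi (q : 𝕜) : 𝕜 :=
  qTheta q (q ^ 2)

/-- Twice Ramanujan's theta function `ψ(q) = ∑ q ^ (n (n + 1) / 2)`, `n ≥ 0`: the sum is extended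
over all integers, so that every triangular number is counted twice. -/
noncomputable def thetaPsi (q : 𝕜) : 𝕜 :=
  qTheta (-1) q

variable [CompleteSpace 𝕜]

lemma thetaPhi_eq_qPochhammer (hq : ‖q‖ < 1) (hq0 : q ≠ 0) :
    thetaPhi q = qPochhammer q (q ^ 2) ^ 2 * qPochhammer (q ^ 2) (q ^ 2) := by
  rw [thetaPhi, qTheta_eq_qPochhammer (norm_pow_lt_one hq two_ne_zero) (pow_ne_zero 2 hq0) hq0,
    sq q, mul_div_cancel_right₀ q hq0]
  ring

lemma thetaPsi_eq_qPochhammer (hq : ‖q‖ < 1) (hq0 : q ≠ 0) :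
    thetaPsi q = 2 * qPochhammer (-q) q ^ 2 * qPochhammer q q := by
  rw [thetaPsi, qTheta_eq_qPochhammer hq hq0 (neg_ne_zero.mpr one_ne_zero),
    qPochhammer_eq_one_sub_mul hq (-1), neg_one_mul, div_neg, div_one]
  ring

lemma thetaPhi_mul_thetaPsi (hq : ‖q‖ < 1) (hq0 : q ≠ 0) :
    thetaPhi q * thetaPsi q = 2 * qPochhammer q q * qPochhammer (q ^ 2) (q ^ 2) := by
  rw [thetaPhi_eq_qPochhammer hq hq0, thetaPsi_eq_qPochhammer hq hq0]
  linear_combination 2 * qPochhammer q q * qPochhammer (q ^ 2) (q ^ 2) *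
    (qPochhammer q (q ^ 2) * qPochhammer (-q) q + 1) * qPochhammer_odd_mul_qPochhammer_neg hq

lemma thetaPhi_sq_mul_thetaPsi (hq : ‖q‖ < 1) (hq0 : q ≠ 0) :
    thetaPhi q ^ 2 * thetaPsi q = 2 * qPochhammer q q ^ 3 := by
  have hphi : thetaPhi q = qPochhammer q (q ^ 2) * qPochhammer q q := by
    rw [thetaPhi_eq_qPochhammer hq hq0, qPochhammer_self_eq_odd_mul_even hq]
    ring
  rw [sq, mul_assoc, thetaPhi_mul_thetaPsi hq hq0, hphi, qPochhammer_self_eq_odd_mul_even hq]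
  ring

lemma thetaPhi_mul_thetaPsi_sq (hq : ‖q‖ < 1) (hq0 : q ≠ 0) :
    thetaPhi q * thetaPsi q ^ 2 = 4 * qPochhammer (q ^ 2) (q ^ 2) ^ 3 := by
  have hpsi : thetaPsi q = 2 * qPochhammer (-q) q * qPochhammer (q ^ 2) (q ^ 2) := by
    rw [thetaPsi_eq_qPochhammer hq hq0, ← qPochhammer_mul_qPochhammer_neg hq]
    ring
  rw [sq, ← mul_assoc, thetaPhi_mul_thetaPsi hq hq0, hpsi, ← qPochhammer_mul_qPochhammer_neg hq]
  ring

lemma thetaPhi_ne_zero [NeZero (2 : 𝕜)] (hq : ‖q‖ < 1) (hq0 : q ≠ 0) : thetaPhi q ≠ 0 := by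
  intro h
  have hprod := thetaPhi_sq_mul_thetaPsi hq hq0
  simp [h, qPochhammer_self_ne_zero hq, two_ne_zero] at hprod

lemma thetaPsi_ne_zero [NeZero (2 : 𝕜)] (hq : ‖q‖ < 1) (hq0 : q ≠ 0) : thetaPsi q ≠ 0 := by
  intro h
  have hprod := thetaPhi_sq_mul_thetaPsi hq hq0
  simp [h, qPochhammer_self_ne_zero hq, two_ne_zero] at hprod

end ThetaPhiPsi

section CubicRelation

variable {𝕜 : Type*} [NormedField 𝕜] [CompleteSpace 𝕜] {q : 𝕜}

lemma thetaPhi_trisection (hq : ‖q‖ < 1) (hq0 : q ≠ 0) :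
    thetaPhi q = thetaPhi (q ^ 9) - 2 * q * qTheta (q ^ 3) (q ^ 18) := by
  have hreflect : qTheta (q ^ 15) (q ^ 18) = qTheta (q ^ 3) (q ^ 18) := by
    rw [← qTheta_div (pow_ne_zero 18 hq0)]
    congr 1
    field_simp
  have hshift : qTheta (q ^ 21) (q ^ 18) = -(q ^ 3)⁻¹ * qTheta (q ^ 3) (q ^ 18) := by
    rw [← qTheta_mul_left (pow_ne_zero 18 hq0) (pow_ne_zero 3 hq0), ← pow_add]
  rw [thetaPhi, thetaPhi,
    qTheta_trisection (norm_pow_lt_one hq two_ne_zero) (pow_ne_zero 2 hq0) hq0]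
  simp only [← pow_mul, ← pow_add, Nat.reduceMul, Nat.reduceAdd, hreflect, hshift]
  field_simp
  ring

lemma thetaPsi_trisection (hq : ‖q‖ < 1) (hq0 : q ≠ 0) :
    thetaPsi q = 2 * qTheta (-q ^ 3) (q ^ 9) + q * thetaPsi (q ^ 9) := by
  have hreflect : qTheta (-q ^ 6) (q ^ 9) = qTheta (-q ^ 3) (q ^ 9) := by
    rw [← qTheta_div (pow_ne_zero 9 hq0)]
    congr 1
    field_simp
  have hshift : qTheta (-q ^ 9) (q ^ 9) = qTheta (-1) (q ^ 9) := by
    simpa using qTheta_mul_left (pow_ne_zero 9 hq0) (neg_ne_zero.mpr one_ne_zero)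
  have hcube : (-1 : 𝕜) ^ 3 = -1 := by norm_num
  rw [thetaPsi, thetaPsi, qTheta_trisection hq hq0 (neg_ne_zero.mpr one_ne_zero), hcube]
  simp only [neg_one_mul, hreflect, hshift]
  ring

lemma qTheta_mul_qTheta_neg (hq : ‖q‖ < 1) (hq0 : q ≠ 0) :
    qTheta q (q ^ 6) * qTheta (-q) (q ^ 3) =
      qPochhammer (q ^ 3) (q ^ 3) * qPochhammer (q ^ 6) (q ^ 6) := by
  have hq3 : ‖q ^ 3‖ < 1 := norm_pow_lt_one hq three_ne_zero
  have heuler := qPochhammer_odd_mul_qPochhammer_neg hq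
  have heuler3 := qPochhammer_odd_mul_qPochhammer_neg hq3
  have hodd : qPochhammer q (q ^ 2) =
      qPochhammer q (q ^ 6) * qPochhammer (q ^ 3) (q ^ 6) * qPochhammer (q ^ 5) (q ^ 6) := by
    rw [qPochhammer_eq_prod_residues (norm_pow_lt_one hq two_ne_zero) q 3]
    simp only [prod_range_succ, prod_range_zero, one_mul]
    ring_nf
  have hneg : qPochhammer (-q) q =
      qPochhammer (-q) (q ^ 3) * qPochhammer (-q ^ 2) (q ^ 3) * qPochhammer (-q ^ 3) (q ^ 3) := by
    rw [qPochhammer_eq_prod_residues hq (-q) 3]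
    simp only [prod_range_succ, prod_range_zero, one_mul]
    ring_nf
  have hcancel : qPochhammer q (q ^ 6) * qPochhammer (q ^ 5) (q ^ 6) *
      (qPochhammer (-q) (q ^ 3) * qPochhammer (-q ^ 2) (q ^ 3)) = 1 := by
    rw [← heuler, hodd, hneg, ← mul_one (_ * _ * _), ← heuler3, ← pow_mul]
    ring
  have hq5 : q ^ 6 / q = q ^ 5 := by field_simp
  have hq2 : q ^ 3 / -q = -q ^ 2 := by field_simp
  rw [qTheta_eq_qPochhammer (norm_pow_lt_one hq (by norm_num)) (pow_ne_zero 6 hq0) hq0,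
    qTheta_eq_qPochhammer hq3 (pow_ne_zero 3 hq0) (neg_ne_zero.mpr hq0), hq5, hq2]
  linear_combination qPochhammer (q ^ 3) (q ^ 3) * qPochhammer (q ^ 6) (q ^ 6) * hcancel

lemma thetaPhi_sub_mul_thetaPsi_sub (hq : ‖q‖ < 1) (hq0 : q ≠ 0) :
    (thetaPhi (q ^ 9) - thetaPhi q) * (thetaPsi q - q * thetaPsi (q ^ 9)) =
      2 * q * (thetaPhi (q ^ 9) * thetaPsi (q ^ 9)) := by
  have hprod := qTheta_mul_qTheta_neg (norm_pow_lt_one hq three_ne_zero) (pow_ne_zero 3 hq0)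
  simp only [← pow_mul, Nat.reduceMul] at hprod
  rw [thetaPhi_trisection hq hq0, thetaPsi_trisection hq hq0,
    thetaPhi_mul_thetaPsi (norm_pow_lt_one hq (by norm_num)) (pow_ne_zero 9 hq0), ← pow_mul]
  linear_combination 4 * q * hprod

end CubicRelation

section DuplicationCurve

/-- The polynomial `h(x, y)` relating the values at `τ` and `2τ`. -/
def duplicationPoly {R : Type*} [CommRing R] (x y : R) : R :=
  x ^ 3 + y ^ 3 - x ^ 2 * y ^ 2 + 9 * x * y - 54

lemma duplicationPoly_eq_zero_of_add_eq {R : Type*} [CommRing R] {u v : R}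
    (h : u + v = u * v + 3) : duplicationPoly (3 + u ^ 2 * v) (3 + u * v ^ 2) = 0 := by
  rw [duplicationPoly]
  -- For `s = u + v` and `p = u * v` the left side is `p ^ 3 * (s ^ 3 - p ^ 3 - 27 - 9 * s * p)`,
  -- and `s - p - 3` divides it because `a + b + c` divides `a ^ 3 + b ^ 3 + c ^ 3 - 3 * a * b * c`.
  linear_combination (u * v) ^ 3 * ((u + v) ^ 2 + (u * v) ^ 2 + 9 + (u + v) * (u * v) +
    3 * (u + v) - 3 * (u * v)) * h

lemma duplicationPoly_involution {K : Type*} [Field K] {x y : K} (hx : x ≠ 0) (hy : y ≠ 0) :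
    duplicationPoly (3 + 27 / x) (3 + 27 / y) =
      (27 / (x * y)) ^ 3 * duplicationPoly (3 + x) (3 + y) := by
  rw [duplicationPoly, duplicationPoly]
  field_simp
  ring

variable {𝕜 : Type*} [NormedField 𝕜] [CompleteSpace 𝕜] {q : 𝕜}

/-- The quotient `η(τ)³ / η(9τ)³` as a function of `q = exp (2πiτ)`. -/
noncomputable def cubicEtaQuotient (q : 𝕜) : 𝕜 :=
  qPochhammer q q ^ 3 / (q * qPochhammer (q ^ 9) (q ^ 9) ^ 3)

theorem duplicationPoly_cubicEtaQuotient [NeZero (2 : 𝕜)] (hq : ‖q‖ < 1) (hq0 : q ≠ 0) :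
    duplicationPoly (3 + cubicEtaQuotient q) (3 + cubicEtaQuotient (q ^ 2)) = 0 := by
  have hq9 : ‖q ^ 9‖ < 1 := norm_pow_lt_one hq (by norm_num)
  have hq90 : q ^ 9 ≠ 0 := pow_ne_zero 9 hq0
  have hphi := thetaPhi_ne_zero hq9 hq90
  have hpsi := thetaPsi_ne_zero hq9 hq90
  set u := thetaPhi q / thetaPhi (q ^ 9) with hu
  set v := thetaPsi q / (q * thetaPsi (q ^ 9)) with hv
  have huv : u + v = u * v + 3 := by
    rw [hu, hv]
    field_simp
    linear_combination thetaPhi_sub_mul_thetaPsi_sub hq hq0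
  have hx : cubicEtaQuotient q = u ^ 2 * v := by
    rw [cubicEtaQuotient, ← mul_div_mul_left _ _ (two_ne_zero' 𝕜), mul_left_comm,
      ← thetaPhi_sq_mul_thetaPsi hq hq0, ← thetaPhi_sq_mul_thetaPsi hq9 hq90, hu, hv]
    field_simp
  have hy : cubicEtaQuotient (q ^ 2) = u * v ^ 2 := by
    have h4 : (4 : 𝕜) ≠ 0 := by
      rw [show (4 : 𝕜) = 2 ^ 2 by norm_num]
      exact pow_ne_zero 2 two_ne_zero
    rw [cubicEtaQuotient, ← mul_div_mul_left _ _ h4, mul_left_comm, pow_right_comm,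
      ← thetaPhi_mul_thetaPsi_sq hq hq0, ← thetaPhi_mul_thetaPsi_sq hq9 hq90, hu, hv]
    field_simp
  rw [hx, hy]
  exact duplicationPoly_eq_zero_of_add_eq huv

end DuplicationCurve

section Eta

open Function.Periodic

lemma qParam_one_natCast_mul (n : ℕ) (τ : ℂ) : qParam 1 (n * τ) = qParam 1 τ ^ n := by
  rw [qParam, qParam, ← Complex.exp_nat_mul]
  congr 1
  push_cast
  ring

lemma qParam_nine_mul_pow_three (τ : ℂ) :
    qParam 24 (9 * τ) ^ 3 = qParam 24 τ ^ 3 * qParam 1 τ := by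
  simp only [qParam, ← Complex.exp_nat_mul, ← Complex.exp_add]
  congr 1
  push_cast
  ring

lemma dedekindEta_eq_qPochhammer (τ : ℂ) :
    dedekindEta τ = qParam 24 τ * qPochhammer (qParam 1 τ) (qParam 1 τ) := by
  have hexp : (Real.pi * I * τ / 12 : ℂ) = 2 * Real.pi * I * τ / (24 : ℝ) := by
    push_cast
    ring
  have hfactor (n : ℕ) :
      Complex.exp (2 * Real.pi * I * (n + 1) * τ) = qParam 1 τ * qParam 1 τ ^ n := by
    rw [← pow_succ', ← qParam_one_natCast_mul, qParam]
    push_cast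
    ring_nf
  rw [dedekindEta, hexp, ← qParam, qPochhammer]
  simp_rw [hfactor]

lemma dedekindEta_ne_zero {τ : ℂ} (hτ : 0 < τ.im) : dedekindEta τ ≠ 0 := by
  rw [dedekindEta_eq_qPochhammer]
  exact mul_ne_zero (qParam_ne_zero τ)
    (qPochhammer_self_ne_zero (norm_qParam_lt_one one_pos hτ))

lemma dedekindEta_pow_three_div (τ : ℂ) :
    dedekindEta τ ^ 3 / dedekindEta (9 * τ) ^ 3 = cubicEtaQuotient (qParam 1 τ) := by
  have hpow : qParam 1 (9 * τ) = qParam 1 τ ^ 9 := mod_cast qParam_one_natCast_mul 9 τ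
  rw [dedekindEta_eq_qPochhammer, dedekindEta_eq_qPochhammer, mul_pow, mul_pow,
    qParam_nine_mul_pow_three, hpow, mul_assoc,
    mul_div_mul_left _ _ (pow_ne_zero 3 (qParam_ne_zero τ)), cubicEtaQuotient]

theorem duplicationPoly_dedekindEta {τ : ℂ} (hτ : 0 < τ.im) :
    duplicationPoly (3 + dedekindEta τ ^ 3 / dedekindEta (9 * τ) ^ 3)
      (3 + dedekindEta (2 * τ) ^ 3 / dedekindEta (9 * (2 * τ)) ^ 3) = 0 := by
  have hpow : qParam 1 (2 * τ) = qParam 1 τ ^ 2 := mod_cast qParam_one_natCast_mul 2 τ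
  rw [dedekindEta_pow_three_div, dedekindEta_pow_three_div, hpow]
  exact duplicationPoly_cubicEtaQuotient (norm_qParam_lt_one one_pos hτ) (qParam_ne_zero τ)

theorem duplicationPoly_beta {τ : ℂ} (hτ : 0 < τ.im) :
    duplicationPoly (beta τ) (beta (2 * τ)) = 0 := by
  have hτ3 : 0 < (τ / 3).im := by simpa using hτ
  have h := duplicationPoly_dedekindEta hτ3
  rwa [show 9 * (τ / 3) = 3 * τ by ring, show 9 * (2 * (τ / 3)) = 3 * (2 * τ) by ring,
    ← mul_div_assoc] at h

theorem duplicationPoly_alpha {τ : ℂ} (hτ : 0 < τ.im) :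
    duplicationPoly (alpha τ) (alpha (2 * τ)) = 0 := by
  have halpha (τ : ℂ) : alpha τ = 3 + 27 / (dedekindEta τ ^ 3 / dedekindEta (9 * τ) ^ 3) := by
    rw [alpha, div_div_eq_mul_div]
  have hne {τ : ℂ} (hτ : 0 < τ.im) : dedekindEta τ ^ 3 / dedekindEta (9 * τ) ^ 3 ≠ 0 :=
    div_ne_zero (pow_ne_zero 3 (dedekindEta_ne_zero hτ))
      (pow_ne_zero 3 (dedekindEta_ne_zero (by simpa using hτ)))
  rw [halpha, halpha, duplicationPoly_involution (hne hτ) (hne (by simpa using hτ)),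
    duplicationPoly_dedekindEta hτ, mul_zero]

end Eta

/-- With `h(x,y) = x³ + y³ − x²y² + 9xy − 54`, for every `τ` in the upper half-plane
`h(β(τ), β(2τ)) = 0` and `h(α(τ), α(2τ)) = 0`. -/
theorem alpha_beta_duplication (τ : ℂ) (hτ : 0 < τ.im) :
    (beta τ ^ 3 + beta (2 * τ) ^ 3 - beta τ ^ 2 * beta (2 * τ) ^ 2 +
      9 * beta τ * beta (2 * τ) - 54 = 0) ∧
    (alpha τ ^ 3 + alpha (2 * τ) ^ 3 - alpha τ ^ 2 * alpha (2 * τ) ^ 2 +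
      9 * alpha τ * alpha (2 * τ) - 54 = 0) := by
  exact ⟨duplicationPoly_beta hτ, duplicationPoly_alpha hτ⟩
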